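/- Let f(t) = 1/√t on (0, 1/2), viewed as an element f ⊕ 0 of the space L¹ of the measure space X = (0,1/2) ⊔ {e} where {e} is an atom of measure 1/2 and (0,1/2) carries Lebesgue measure. Then for every a ∈ [0, 1/2), the function g = f·χ_{(0,a)} ⊕ (2∫_a^{1/2} f(t) dt)·χ_{{e}} is an extreme point of Ω(f ⊕ 0) = {h ∈ L¹(X) : h ≺ f ⊕ 0}. In particular, 0 ⊕ 2√2·χ_{{e}} is an extreme point of Ω(f ⊕ 0). -/

import Mathlib

open MeasureTheory Set

variable {X : Type*} [MeasurableSpace X]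

/-- The decreasing rearrangement (spectral scale) of `f` with respect to `μ`. -/
noncomputable def rr (μ : Measure X) (f : X → ℝ) (t : ℝ) : ℝ :=
  sInf {s : ℝ | μ {u | s < f u} ≤ ENNReal.ofReal t}

/-- Hardy–Littlewood–Pólya majorisation `g ≺ f` with respect to `μ`. -/
def Maj (μ : Measure X) (g f : X → ℝ) : Prop :=
  (∀ s ∈ Ico (0:ℝ) 1, (∫ t in Ioo (0:ℝ) s, rr μ g t) ≤ ∫ t in Ioo (0:ℝ) s, rr μ f t) ∧
    (∫ t in Ioo (0:ℝ) 1, rr μ g t) = ∫ t in Ioo (0:ℝ) 1, rr μ f t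

/-- The orbit `Ω(y)` of all integrable functions majorised by `y`. -/
def Omega (μ : Measure X) (y : X → ℝ) : Set (X → ℝ) :=
  {x | Integrable x μ ∧ Maj μ x y}

/-- `x` is an extreme point of the convex set `Ω` (functions identified `μ`-a.e.). -/
def ExtremePt (μ : Measure X) (Ω : Set (X → ℝ)) (x : X → ℝ) : Prop :=
  x ∈ Ω ∧ ∀ x₁ ∈ Ω, ∀ x₂ ∈ Ω,
    (∀ᵐ u ∂μ, x u = (x₁ u + x₂ u) / 2) → (∀ᵐ u ∂μ, x₁ u = x₂ u)

/-- The measure on `(0,1/2) ⊔ {e}`: Lebesgue measure on the interval plus an atom of mass `1/2`. -/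
noncomputable def muX : Measure (ℝ ⊕ Unit) :=
  Measure.map Sum.inl (volume.restrict (Ioo (0:ℝ) (1/2))) +
    (ENNReal.ofReal (1/2)) • Measure.dirac (Sum.inr ())

/-- The function `f ⊕ 0` with `f(t) = 1/√t` on `(0,1/2)`. -/
noncomputable def fX : ℝ ⊕ Unit → ℝ :=
  Sum.elim (fun t => if t ∈ Ioo (0:ℝ) (1/2) then 1 / Real.sqrt t else 0) (fun _ => 0)

/-- The function `f·χ_(0,a) ⊕ 2∫_a^{1/2} f`. -/
noncomputable def gX (a : ℝ) : ℝ ⊕ Unit → ℝ :=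
  Sum.elim (fun t => if t ∈ Ioo (0:ℝ) a then 1 / Real.sqrt t else 0)
    (fun _ => 2 * ∫ t in Ioo a (1/2 : ℝ), 1 / Real.sqrt t)

lemma rr_le_iff {μ : Measure X} [IsProbabilityMeasure μ] {f : X → ℝ} (hf : AEMeasurable f μ)
    {t : ℝ} (ht : t ∈ Ioo (0:ℝ) 1) (s : ℝ) :
    rr μ f t ≤ s ↔ μ {u | s < f u} ≤ ENNReal.ofReal t := by
  have hmono : ∀ {r s : ℝ}, r ≤ s → μ {u | s < f u} ≤ μ {u | r < f u} :=
    fun h => measure_mono fun u hu => lt_of_le_of_lt h hu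
  have hne : {s : ℝ | μ {u | s < f u} ≤ ENNReal.ofReal t}.Nonempty := by
    have h : Filter.Tendsto (fun n : ℕ => μ {u | (n : ℝ) < f u}) Filter.atTop
        (nhds (μ (⋂ n : ℕ, {u | (n : ℝ) < f u}))) := by
      refine tendsto_measure_iInter_atTop (fun n => nullMeasurableSet_lt aemeasurable_const hf)
        (fun m n hmn u hu => (Nat.cast_le (α := ℝ).2 hmn).trans_lt hu) ⟨0, measure_ne_top _ _⟩
    have he : (⋂ n : ℕ, {u | (n : ℝ) < f u}) = ∅ := by
      refine eq_empty_of_forall_notMem fun u hu => ?_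
      obtain ⟨n, hn⟩ := exists_nat_ge (f u)
      exact absurd (mem_iInter.1 hu n) (not_lt.2 hn)
    rw [he, measure_empty] at h
    obtain ⟨n, hn⟩ := (h.eventually_le_const (ENNReal.ofReal_pos.2 ht.1)).exists
    exact ⟨n, hn⟩
  have hbdd : BddBelow {s : ℝ | μ {u | s < f u} ≤ ENNReal.ofReal t} := by
    have h : Filter.Tendsto (fun n : ℕ => μ {u | -(n : ℝ) < f u}) Filter.atTop
        (nhds (μ (⋃ n : ℕ, {u | -(n : ℝ) < f u}))) :=
      tendsto_measure_iUnion_atTop fun m n hmn u hu =>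
        (neg_le_neg (Nat.cast_le (α := ℝ).2 hmn)).trans_lt hu
    have he : (⋃ n : ℕ, {u | -(n : ℝ) < f u}) = univ := by
      refine eq_univ_of_forall fun u => ?_
      obtain ⟨n, hn⟩ := exists_nat_gt (-f u)
      exact mem_iUnion.2 ⟨n, neg_lt.1 hn⟩
    rw [he, measure_univ] at h
    have ht1 : ENNReal.ofReal t < 1 := by simpa using ht.2
    obtain ⟨n, hn⟩ := (h.eventually_const_lt ht1).exists
    refine ⟨-(n : ℝ), fun s hs => ?_⟩
    by_contra! hlt
    exact absurd (hn.trans_le ((hmono hlt.le).trans hs)) (lt_irrefl _)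
  refine ⟨fun h => ?_, fun h => csInf_le hbdd h⟩
  have hU : {u | s < f u} = ⋃ n : ℕ, {u | s + 1 / ((n : ℝ) + 1) < f u} := by
    ext u
    simp only [mem_ofPred_eq, mem_iUnion]
    refine ⟨fun hu => ?_, fun ⟨n, hn⟩ => lt_trans (lt_add_of_pos_right _ (by positivity)) hn⟩
    obtain ⟨n, hn⟩ := exists_nat_one_div_lt (sub_pos.2 hu)
    exact ⟨n, by linarith⟩
  have hlim : Filter.Tendsto (fun n : ℕ => μ {u | s + 1 / ((n : ℝ) + 1) < f u}) Filter.atTop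
      (nhds (μ {u | s < f u})) := by
    rw [hU]
    refine tendsto_measure_iUnion_atTop fun m n hmn u hu => ?_
    refine lt_of_le_of_lt (?_ : s + 1 / ((n : ℝ) + 1) ≤ s + 1 / ((m : ℝ) + 1)) hu
    gcongr
  refine le_of_tendsto' hlim fun n => ?_
  obtain ⟨r, hr, hrs⟩ := exists_lt_of_csInf_lt hne
    (h.trans_lt (lt_add_of_pos_right s (by positivity : (0:ℝ) < 1 / ((n : ℝ) + 1))))
  exact (hmono hrs.le).trans hr

lemma lt_rr_iff {μ : Measure X} [IsProbabilityMeasure μ] {f : X → ℝ} (hf : AEMeasurable f μ)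
    {t : ℝ} (ht : t ∈ Ioo (0:ℝ) 1) (s : ℝ) :
    s < rr μ f t ↔ t < μ.real {u | s < f u} := by
  rw [← not_le, rr_le_iff hf ht, not_le, Measure.real,
    ENNReal.ofReal_lt_iff_lt_toReal ht.1.le (measure_ne_top _ _)]

lemma antitoneOn_rr {μ : Measure X} [IsProbabilityMeasure μ] {f : X → ℝ} (hf : AEMeasurable f μ) :
    AntitoneOn (rr μ f) (Ioo 0 1) := fun t ht s hs hts => by
  rw [rr_le_iff hf hs]
  exact ((rr_le_iff hf ht _).1 le_rfl).trans (ENNReal.ofReal_le_ofReal hts)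

lemma aemeasurable_rr {μ : Measure X} [IsProbabilityMeasure μ] {f : X → ℝ}
    (hf : AEMeasurable f μ) : AEMeasurable (rr μ f) (volume.restrict (Ioo 0 1)) :=
  aemeasurable_restrict_of_antitoneOn measurableSet_Ioo (antitoneOn_rr hf)

lemma map_rr {μ : Measure X} [IsProbabilityMeasure μ] {f : X → ℝ} (hf : AEMeasurable f μ) :
    Measure.map (rr μ f) (volume.restrict (Ioo 0 1)) = Measure.map f μ := by
  have : IsProbabilityMeasure (volume.restrict (Ioo (0:ℝ) 1)) := ⟨by simp⟩
  have := Measure.isProbabilityMeasure_map (aemeasurable_rr hf)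
  have := Measure.isProbabilityMeasure_map hf
  refine Measure.ext_of_Iic _ _ fun s => ?_
  rw [← compl_Ioi, prob_compl_eq_one_sub measurableSet_Ioi,
    prob_compl_eq_one_sub measurableSet_Ioi, Measure.map_apply_of_aemeasurable hf measurableSet_Ioi,
    Measure.map_apply_of_aemeasurable (aemeasurable_rr hf) measurableSet_Ioi,
    Measure.restrict_apply₀' measurableSet_Ioo.nullMeasurableSet]
  have h : rr μ f ⁻¹' Ioi s ∩ Ioo 0 1 = Ioo 0 (μ.real {u | s < f u}) := by
    ext t
    constructor
    · exact fun ⟨h, ht⟩ => ⟨ht.1, (lt_rr_iff hf ht s).1 h⟩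
    · intro h
      have ht : t ∈ Ioo (0:ℝ) 1 := ⟨h.1, h.2.trans_le measureReal_le_one⟩
      exact ⟨(lt_rr_iff hf ht s).2 h.2, ht⟩
  rw [h, Real.volume_Ioo, sub_zero, ofReal_measureReal]
  rfl

lemma integrableOn_rr {μ : Measure X} [IsProbabilityMeasure μ] {f : X → ℝ} (hf : Integrable f μ) :
    IntegrableOn (rr μ f) (Ioo 0 1) := by
  have h : Integrable id (Measure.map f μ) :=
    (integrable_map_measure aestronglyMeasurable_id hf.aemeasurable).2 hf
  rw [← map_rr hf.aemeasurable] at h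
  exact (integrable_map_measure aestronglyMeasurable_id (aemeasurable_rr hf.aemeasurable)).1 h

lemma integral_comp_rr {μ : Measure X} [IsProbabilityMeasure μ] {f : X → ℝ}
    (hf : AEMeasurable f μ) {φ : ℝ → ℝ} (hφ : Measurable φ) :
    ∫ t in Ioo (0:ℝ) 1, φ (rr μ f t) = ∫ u, φ (f u) ∂μ := by
  rw [← integral_map hf hφ.aestronglyMeasurable, ← map_rr hf,
    integral_map (aemeasurable_rr hf) hφ.aestronglyMeasurable]

lemma integral_Ioo_rr {μ : Measure X} [IsProbabilityMeasure μ] {f : X → ℝ}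
    (hf : AEMeasurable f μ) : ∫ t in Ioo (0:ℝ) 1, rr μ f t = ∫ u, f u ∂μ :=
  integral_comp_rr hf measurable_id

lemma integral_Ioo_rr_le {μ : Measure X} [IsProbabilityMeasure μ] {f : X → ℝ}
    (hf : Integrable f μ) {s : ℝ} (hs : s ∈ Icc (0:ℝ) 1) (r : ℝ) :
    ∫ t in Ioo (0:ℝ) s, rr μ f t ≤ s * r + ∫ u, max (f u - r) 0 ∂μ := by
  have hsub : Ioo (0:ℝ) s ⊆ Ioo 0 1 := Ioo_subset_Ioo_right hs.2
  have hi := integrableOn_rr hf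
  have hr : IntegrableOn (fun _ : ℝ => r) (Ioo 0 1) := by simp
  have hp : IntegrableOn (fun t => max (rr μ f t - r) 0) (Ioo 0 1) := (hi.sub hr).pos_part
  rw [← integral_comp_rr hf.aemeasurable (φ := fun y => max (y - r) 0) (by fun_prop)]
  have h1 : ∫ t in Ioo (0:ℝ) s, rr μ f t - r ≤ ∫ t in Ioo (0:ℝ) s, max (rr μ f t - r) 0 :=
    setIntegral_mono ((hi.sub hr).mono_set hsub) (hp.mono_set hsub) fun t => le_max_left _ _
  have h2 : ∫ t in Ioo (0:ℝ) s, max (rr μ f t - r) 0 ≤ ∫ t in Ioo (0:ℝ) 1, max (rr μ f t - r) 0 :=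
    setIntegral_mono_set hp (.of_forall fun t => le_max_right _ _) hsub.eventuallyLE
  rw [integral_sub (hi.mono_set hsub) (hr.mono_set hsub)] at h1
  simp [hs.1] at h1
  linarith

lemma integral_Ioo_rr_eq {μ : Measure X} [IsProbabilityMeasure μ] {f : X → ℝ}
    (hf : Integrable f μ) {s r : ℝ} (hs : s ∈ Icc (0:ℝ) 1)
    (hr₁ : ∀ t ∈ Ioo (0:ℝ) 1, t < s → r ≤ rr μ f t)
    (hr₂ : ∀ t ∈ Ioo (0:ℝ) 1, s ≤ t → rr μ f t ≤ r) :
    ∫ t in Ioo (0:ℝ) s, rr μ f t = s * r + ∫ u, max (f u - r) 0 ∂μ := by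
  have hsub : Ioo (0:ℝ) s ⊆ Ioo 0 1 := Ioo_subset_Ioo_right hs.2
  have hi := integrableOn_rr hf
  have hr : IntegrableOn (fun _ : ℝ => r) (Ioo 0 1) := by simp
  rw [← integral_comp_rr hf.aemeasurable (φ := fun y => max (y - r) 0) (by fun_prop)]
  have h : ∫ t in Ioo (0:ℝ) s, rr μ f t - r = ∫ t in Ioo (0:ℝ) 1, max (rr μ f t - r) 0 := by
    rw [← inter_eq_self_of_subset_right hsub, ← setIntegral_indicator measurableSet_Ioo]
    refine setIntegral_congr_fun measurableSet_Ioo fun t ht => ?_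
    by_cases hts : t < s
    · rw [indicator_of_mem (show t ∈ Ioo 0 s from ⟨ht.1, hts⟩)]
      exact (max_eq_left (sub_nonneg.2 (hr₁ t ht hts))).symm
    · rw [indicator_of_notMem (fun h => hts h.2)]
      exact (max_eq_right (sub_nonpos.2 (hr₂ t ht (not_lt.1 hts)))).symm
  rw [integral_sub (hi.mono_set hsub) (hr.mono_set hsub)] at h
  simp [hs.1] at h
  linarith

/-- Majorisation is tested by the hinge functions `y ↦ (y - r)⁺`. -/
lemma maj_iff_integral_max {μ : Measure X} [IsProbabilityMeasure μ] {f g : X → ℝ}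
    (hf : Integrable f μ) (hg : Integrable g μ) :
    Maj μ g f ↔ (∀ r, ∫ u, max (g u - r) 0 ∂μ ≤ ∫ u, max (f u - r) 0 ∂μ) ∧
      ∫ u, g u ∂μ = ∫ u, f u ∂μ := by
  rw [Maj, integral_Ioo_rr hf.aemeasurable, integral_Ioo_rr hg.aemeasurable]
  refine and_congr_left fun htot => ⟨fun h r => ?_, fun h s hs => ?_⟩
  · set s := μ.real {u | r < g u} with hsdef
    have hs : s ∈ Icc (0:ℝ) 1 := ⟨measureReal_nonneg, measureReal_le_one⟩
    have h1 := integral_Ioo_rr_eq hg hs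
      (fun t ht hts => ((lt_rr_iff hg.aemeasurable ht r).2 hts).le)
      (fun t ht hts => not_lt.1 fun hlt =>
        not_lt.2 hts ((lt_rr_iff hg.aemeasurable ht r).1 hlt))
    have h2 := integral_Ioo_rr_le hf hs r
    have h3 : ∫ t in Ioo (0:ℝ) s, rr μ g t ≤ ∫ t in Ioo (0:ℝ) s, rr μ f t := by
      rcases hs.2.lt_or_eq with hlt | heq
      · exact h s ⟨hs.1, hlt⟩
      · rw [heq, integral_Ioo_rr hf.aemeasurable, integral_Ioo_rr hg.aemeasurable, htot]
    linarith
  · rcases hs.1.eq_or_lt with rfl | hpos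
    · simp
    have hs' : s ∈ Ioo (0:ℝ) 1 := ⟨hpos, hs.2⟩
    have h1 := integral_Ioo_rr_eq hf (Ioo_subset_Icc_self hs')
      (fun t ht hts => antitoneOn_rr hf.aemeasurable ht hs' hts.le)
      (fun t ht hts => antitoneOn_rr hf.aemeasurable hs' ht hts)
    have h2 := integral_Ioo_rr_le hg (Ioo_subset_Icc_self hs') (rr μ f s)
    linarith [h (rr μ f s)]

/-- If the hinge bound at level `r` is attained on `A` by the midpoint of two elements of the orbit
of `f`, then both elements are at least `r` on `A` and at most `r` off `A`. -/
lemma ae_le_of_attains_hinge {μ : Measure X} [IsProbabilityMeasure μ] {f g x₁ x₂ : X → ℝ}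
    (hf : Integrable f μ) (h₁ : x₁ ∈ Omega μ f) (h₂ : x₂ ∈ Omega μ f)
    (hmid : ∀ᵐ u ∂μ, g u = (x₁ u + x₂ u) / 2) {A : Set X} (hA : MeasurableSet A) {r : ℝ}
    (hr : ∫ u, max (f u - r) 0 ∂μ ≤ ∫ u, A.indicator (fun u => g u - r) u ∂μ) :
    ∀ᵐ u ∂μ, (u ∈ A → r ≤ x₁ u) ∧ (u ∉ A → x₁ u ≤ r) := by
  have key : ∀ x : X → ℝ, Integrable x μ →
      Integrable (fun u => max (x u - r) 0 - A.indicator (fun u => x u - r) u) μ ∧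
      0 ≤ (fun u => max (x u - r) 0 - A.indicator (fun u => x u - r) u) ∧
      ∫ u, (max (x u - r) 0 - A.indicator (fun u => x u - r) u) ∂μ =
        ∫ u, max (x u - r) 0 ∂μ - ∫ u, A.indicator (fun u => x u - r) u ∂μ := by
    intro x hx
    have hxr : Integrable (fun u => x u - r) μ := hx.sub (integrable_const r)
    refine ⟨hxr.pos_part.sub (hxr.indicator hA), fun u => ?_,
      integral_sub hxr.pos_part (hxr.indicator hA)⟩
    by_cases hu : u ∈ A <;> simp [hu]
  obtain ⟨i₁, n₁, e₁⟩ := key x₁ h₁.1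
  obtain ⟨i₂, n₂, e₂⟩ := key x₂ h₂.1
  have hsum : ∫ u, A.indicator (fun u => x₁ u - r) u ∂μ + ∫ u, A.indicator (fun u => x₂ u - r) u ∂μ
      = 2 * ∫ u, A.indicator (fun u => g u - r) u ∂μ := by
    have hi : ∀ x : X → ℝ, Integrable x μ → Integrable (A.indicator fun u => x u - r) μ :=
      fun x hx => (hx.sub (integrable_const r)).indicator hA
    rw [← integral_add (hi x₁ h₁.1) (hi x₂ h₂.1), ← integral_const_mul]
    refine integral_congr_ae ?_
    filter_upwards [hmid] with u hu
    by_cases huA : u ∈ A <;> simp [huA, hu]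
    ring
  have b₁ := ((maj_iff_integral_max hf h₁.1).1 h₁.2).1 r
  have b₂ := ((maj_iff_integral_max hf h₂.1).1 h₂.2).1 r
  have p₂ := integral_nonneg (μ := μ) n₂
  have p₁ := integral_nonneg (μ := μ) n₁
  have hz := (integral_eq_zero_iff_of_nonneg n₁ i₁).1 (by linarith)
  filter_upwards [hz] with u hu
  by_cases huA : u ∈ A <;> simpa [huA, sub_eq_zero] using hu

lemma measurableEmbedding_sumInl {α β : Type*} [MeasurableSpace α] [MeasurableSpace β] :
    MeasurableEmbedding (Sum.inl : α → α ⊕ β) :=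
  ⟨Sum.inl_injective, measurable_inl, fun _ hs => hs.inl_image⟩

lemma measurableEmbedding_sumInr {α β : Type*} [MeasurableSpace α] [MeasurableSpace β] :
    MeasurableEmbedding (Sum.inr : β → α ⊕ β) :=
  ⟨Sum.inr_injective, measurable_inr, fun _ hs => measurableSet_inr_image.2 hs⟩

instance : IsProbabilityMeasure muX := ⟨by
  have h : Measurable (Sum.inl : ℝ → ℝ ⊕ Unit) := measurable_inl
  rw [muX, Measure.add_apply, Measure.map_apply h .univ, Measure.smul_apply]
  simp
  rw [← two_mul]
  exact ENNReal.mul_inv_cancel (by simp) (by simp)⟩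

lemma dirac_inr_eq_map :
    (Measure.dirac (Sum.inr ()) : Measure (ℝ ⊕ Unit)) = Measure.map Sum.inr (Measure.dirac ()) :=
  (Measure.map_dirac' measurable_inr ()).symm

lemma ae_muX_iff {p : ℝ ⊕ Unit → Prop} :
    (∀ᵐ u ∂muX, p u) ↔ (∀ᵐ t ∂volume.restrict (Ioo (0:ℝ) (1/2)), p (.inl t)) ∧ p (.inr ()) := by
  rw [muX, dirac_inr_eq_map, ae_add_measure_iff, measurableEmbedding_sumInl.ae_map_iff,
    Measure.ae_ennreal_smul_measure_iff (by simp), measurableEmbedding_sumInr.ae_map_iff]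
  simp

lemma integrable_muX {h : ℝ ⊕ Unit → ℝ} (hh : IntegrableOn (fun t => h (.inl t)) (Ioo 0 (1/2))) :
    Integrable h muX := by
  refine Integrable.add_measure ?_ (Integrable.smul_measure ?_ (by simp))
  · exact measurableEmbedding_sumInl.integrable_map_iff.2 hh
  · rw [dirac_inr_eq_map, measurableEmbedding_sumInr.integrable_map_iff]
    simp

lemma integral_muX {h : ℝ ⊕ Unit → ℝ} (hh : IntegrableOn (fun t => h (.inl t)) (Ioo 0 (1/2))) :
    ∫ u, h u ∂muX = (∫ t in Ioo (0:ℝ) (1/2), h (.inl t)) + h (.inr ()) / 2 := by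
  have hd : Integrable h (Measure.dirac (Sum.inr ())) := by
    rw [dirac_inr_eq_map, measurableEmbedding_sumInr.integrable_map_iff]
    simp
  rw [muX, integral_add_measure (measurableEmbedding_sumInl.integrable_map_iff.2 hh)
    (hd.smul_measure (by simp)), measurableEmbedding_sumInl.integral_map, integral_smul_measure,
    dirac_inr_eq_map, measurableEmbedding_sumInr.integral_map]
  simp
  ring

lemma integrableOn_one_div_sqrt : IntegrableOn (fun t : ℝ => 1 / √t) (Ioo 0 (1/2)) := by
  have h := (intervalIntegral.intervalIntegrable_rpow' (a := 0) (b := 1/2)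
    (by norm_num : (-1:ℝ) < -(1/2))).1
  refine (h.mono_set Ioo_subset_Ioc_self).congr_fun (fun t ht => ?_) measurableSet_Ioo
  simp [Real.sqrt_eq_rpow, Real.rpow_neg ht.1.le]

lemma integral_one_div_sqrt : ∫ t in Ioo (0:ℝ) (1/2), 1 / √t = √2 := by
  have h : ∫ t in Ioo (0:ℝ) (1/2), 1 / √t = ∫ t in (0:ℝ)..(1/2), t ^ (-(1/2) : ℝ) := by
    rw [intervalIntegral.integral_of_le (by norm_num), integral_Ioc_eq_integral_Ioo]
    refine setIntegral_congr_fun measurableSet_Ioo fun t ht => ?_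
    simp [Real.sqrt_eq_rpow, Real.rpow_neg ht.1.le]
  have h2 : (2:ℝ) = √2 * √2 := (Real.mul_self_sqrt (by norm_num)).symm
  have h0 : √2 ≠ 0 := by positivity
  rw [h, integral_rpow (by norm_num)]
  norm_num
  rw [← Real.sqrt_eq_rpow, Real.sqrt_div zero_le_one, Real.sqrt_one]
  field_simp
  linarith

lemma fX_inl {t : ℝ} (ht : t ∈ Ioo (0:ℝ) (1/2)) : fX (.inl t) = 1 / √t := if_pos ht

lemma gX_inl (a t : ℝ) : gX a (.inl t) = (Ioo 0 a).indicator (fun t => 1 / √t) t := by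
  classical exact (indicator_apply (Ioo 0 a) (fun t => 1 / √t) t).symm ▸ if_congr Iff.rfl rfl rfl

lemma integrableOn_fX : IntegrableOn (fun t => fX (.inl t)) (Ioo 0 (1/2)) :=
  integrableOn_one_div_sqrt.congr_fun (fun _ ht => (fX_inl ht).symm) measurableSet_Ioo

lemma integrableOn_gX (a : ℝ) : IntegrableOn (fun t => gX a (.inl t)) (Ioo 0 (1/2)) :=
  (integrableOn_one_div_sqrt.indicator measurableSet_Ioo).congr_fun
    (fun t _ => (gX_inl a t).symm) measurableSet_Ioo

lemma fX_nonneg (u : ℝ ⊕ Unit) : 0 ≤ fX u := by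
  rcases u with t | e
  · simp only [fX, Sum.elim_inl]
    split_ifs <;> positivity
  · exact le_rfl

lemma gX_nonneg (a : ℝ) (u : ℝ ⊕ Unit) : 0 ≤ gX a u := by
  rcases u with t | e
  · simp only [gX, Sum.elim_inl]
    split_ifs <;> positivity
  · exact mul_nonneg zero_le_two (integral_nonneg fun t => by positivity)

lemma setIntegral_Ioo_split {h : ℝ → ℝ} (hh : IntegrableOn h (Ioo 0 (1/2))) {a : ℝ}
    (ha : a ∈ Ico (0:ℝ) (1/2)) :
    ∫ t in Ioo (0:ℝ) (1/2), h t =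
      (∫ t in Ioo (0:ℝ) (1/2), (Ioo 0 a).indicator h t) + ∫ t in Ioo a (1/2), h t := by
  rw [setIntegral_indicator measurableSet_Ioo,
    inter_eq_self_of_subset_right (Ioo_subset_Ioo_right ha.2.le),
    ← integral_Ioc_eq_integral_Ioo (x := 0) (y := a),
    ← Ioc_union_Ioo_eq_Ioo ha.1 ha.2, setIntegral_union _ measurableSet_Ioo]
  · exact hh.mono_set fun t ht => ⟨ht.1, ht.2.trans_lt ha.2⟩
  · exact hh.mono_set (Ioo_subset_Ioo_left ha.1)
  · exact Set.disjoint_left.2 fun t h₁ h₂ => not_lt.2 h₁.2 h₂.1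

lemma integral_gX {a : ℝ} (ha : a ∈ Ico (0:ℝ) (1/2)) :
    ∫ u, gX a u ∂muX = ∫ u, fX u ∂muX := by
  rw [integral_muX (integrableOn_gX a), integral_muX integrableOn_fX,
    setIntegral_congr_fun measurableSet_Ioo fun t ht => fX_inl ht,
    setIntegral_Ioo_split integrableOn_one_div_sqrt ha]
  simp only [gX_inl]
  simp [gX, fX]

lemma integral_max_gX_sub_le {a : ℝ} (ha : a ∈ Ico (0:ℝ) (1/2)) (r : ℝ) :
    ∫ u, max (gX a u - r) 0 ∂muX ≤ ∫ u, max (fX u - r) 0 ∂muX := by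
  have hfi := (integrable_muX integrableOn_fX).sub (integrable_const r)
  have hgi := (integrable_muX (integrableOn_gX a)).sub (integrable_const r)
  rcases le_or_gt 0 r with hr | hr
  · have hconst : IntegrableOn (fun _ : ℝ => r) (Ioo 0 (1/2)) := by simp
    have hsub : Ioo a (1/2) ⊆ Ioo 0 (1/2) := Ioo_subset_Ioo_left ha.1
    have hp : IntegrableOn (fun t => max (1 / √t - r) 0) (Ioo 0 (1/2)) :=
      (integrableOn_one_div_sqrt.sub hconst).pos_part
    have hinl : ∀ t, max (gX a (.inl t) - r) 0 =
        (Ioo 0 a).indicator (fun t => max (1 / √t - r) 0) t := fun t => by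
      by_cases ht : t ∈ Ioo 0 a <;> simp [gX_inl, ht, hr]
    have htail : ∫ t in Ioo a (1/2), 1 / √t - r ≤ ∫ t in Ioo a (1/2), max (1 / √t - r) 0 :=
      setIntegral_mono ((integrableOn_one_div_sqrt.sub hconst).mono_set hsub) (hp.mono_set hsub)
        fun t => le_max_left _ _
    have htail0 : 0 ≤ ∫ t in Ioo a (1/2), max (1 / √t - r) 0 :=
      integral_nonneg fun t => le_max_right _ _
    rw [integral_sub (integrableOn_one_div_sqrt.mono_set hsub) (hconst.mono_set hsub),
      setIntegral_const, Real.volume_real_Ioo_of_le ha.2.le, smul_eq_mul] at htail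
    rw [integral_muX (h := fun u => max (gX a u - r) 0) ((integrableOn_gX a).sub hconst).pos_part,
      integral_muX (h := fun u => max (fX u - r) 0) (integrableOn_fX.sub hconst).pos_part,
      setIntegral_congr_fun (f := fun t => max (fX (.inl t) - r) 0)
        (g := fun t => max (1 / √t - r) 0) measurableSet_Ioo
        (fun t ht => by simp only [fX_inl ht]),
      setIntegral_Ioo_split hp ha]
    simp only [hinl]
    have h0 : max (fX (.inr ()) - r) 0 = 0 := max_eq_right (by simp [fX, hr])
    have h1 : max (gX a (.inr ()) - r) 0 / 2 ≤ ∫ t in Ioo a (1/2), max (1 / √t - r) 0 := by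
      rw [div_le_iff₀ two_pos]
      refine max_le ?_ (by positivity)
      simp only [gX, Sum.elim_inr]
      nlinarith [mul_nonneg ha.1 hr]
    rw [h0]
    linarith
  · calc ∫ u, max (gX a u - r) 0 ∂muX = ∫ u, gX a u - r ∂muX :=
          integral_congr_ae (.of_forall fun u => max_eq_left (by linarith [gX_nonneg a u]))
      _ = ∫ u, fX u - r ∂muX := by
          rw [integral_sub (integrable_muX (integrableOn_gX a)) (integrable_const r),
            integral_sub (integrable_muX integrableOn_fX) (integrable_const r), integral_gX ha]
      _ ≤ ∫ u, max (fX u - r) 0 ∂muX :=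
          integral_mono hfi hfi.pos_part fun u => le_max_left _ _

lemma gX_mem_Omega {a : ℝ} (ha : a ∈ Ico (0:ℝ) (1/2)) : gX a ∈ Omega muX fX :=
  ⟨integrable_muX (integrableOn_gX a), (maj_iff_integral_max (integrable_muX integrableOn_fX)
    (integrable_muX (integrableOn_gX a))).2 ⟨integral_max_gX_sub_le ha, integral_gX ha⟩⟩

/-- The hinge at level `1/√s` is attained by `gX a` on the initial interval `(0,s)`. -/
lemma max_fX_sub_eq_indicator {a s : ℝ} (ha : a < 1 / 2) (hs : s ∈ Ioc 0 a) (u : ℝ ⊕ Unit) :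
    max (fX u - 1 / √s) 0 = (Sum.inl '' Ioo 0 s).indicator (fun u => gX a u - 1 / √s) u := by
  have hpos : 0 ≤ 1 / √s := by positivity
  rcases u with t | e
  · by_cases ht : t ∈ Ioo 0 s
    · have hta : t ∈ Ioo 0 a := ⟨ht.1, ht.2.trans_le hs.2⟩
      have hle : 1 / √s ≤ 1 / √t :=
        one_div_le_one_div_of_le (Real.sqrt_pos.2 ht.1) (Real.sqrt_le_sqrt ht.2.le)
      rw [indicator_of_mem (mem_image_of_mem _ ht), fX_inl ⟨ht.1, hta.2.trans ha⟩, gX_inl,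
        indicator_of_mem hta, max_eq_left (sub_nonneg.2 hle)]
    · rw [indicator_of_notMem (by simpa using ht), max_eq_right (sub_nonpos.2 _)]
      simp only [fX, Sum.elim_inl]
      split_ifs with ht'
      · exact one_div_le_one_div_of_le (Real.sqrt_pos.2 hs.1)
          (Real.sqrt_le_sqrt (not_lt.1 fun h => ht ⟨ht'.1, h⟩))
      · exact hpos
  · rw [indicator_of_notMem (by simp), max_eq_right (by simp [fX])]

lemma ae_eq_gX_on_Ioo {a : ℝ} (ha : a ∈ Ico (0:ℝ) (1/2)) {x₁ x₂ : ℝ ⊕ Unit → ℝ}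
    (h₁ : x₁ ∈ Omega muX fX) (h₂ : x₂ ∈ Omega muX fX)
    (hmid : ∀ᵐ u ∂muX, gX a u = (x₁ u + x₂ u) / 2) :
    ∀ᵐ t ∂volume.restrict (Ioo (0:ℝ) (1/2)), t ∈ Ioo 0 a → x₁ (.inl t) = 1 / √t := by
  have h : ∀ q : ℚ, ∀ᵐ t ∂volume.restrict (Ioo (0:ℝ) (1/2)), (q : ℝ) ∈ Ioc 0 a →
      (t ∈ Ioo 0 (q : ℝ) → 1 / √(q : ℝ) ≤ x₁ (.inl t)) ∧
      (t ∉ Ioo 0 (q : ℝ) → x₁ (.inl t) ≤ 1 / √(q : ℝ)) := by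
    intro q
    by_cases hq : (q : ℝ) ∈ Ioc 0 a
    · have := ae_le_of_attains_hinge (integrable_muX integrableOn_fX) h₁ h₂ hmid
        (measurableEmbedding_sumInl.measurableSet_image.2 (measurableSet_Ioo (a := 0) (b := (q : ℝ))))
        (integral_congr_ae (.of_forall (max_fX_sub_eq_indicator ha.2 hq))).le
      filter_upwards [(ae_muX_iff.1 this).1] with t ht _
      simpa using ht
    · exact .of_forall fun t hq' => absurd hq' hq
  filter_upwards [ae_all_iff.2 h] with t ht hta
  have hcont : ContinuousAt (fun s : ℝ => 1 / √s) t :=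
    continuousAt_const.div Real.continuous_sqrt.continuousAt (Real.sqrt_pos.2 hta.1).ne'
  refine le_antisymm (le_of_forall_gt_imp_ge_of_dense fun c hc => ?_)
    (le_of_forall_lt_imp_le_of_dense fun c hc => ?_)
  · obtain ⟨l, hl, hlt⟩ := exists_Ioc_subset_of_mem_nhds
      ((hcont.eventually_lt_const hc).and (lt_mem_nhds hta.1)) ⟨0, hta.1⟩
    obtain ⟨q, hlq, hqt⟩ := exists_rat_btwn hl
    obtain ⟨hqc, hq0⟩ := hlt ⟨hlq, hqt.le⟩
    exact ((ht q ⟨hq0, hqt.le.trans hta.2.le⟩).2 fun h => lt_asymm h.2 hqt).trans hqc.le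
  · obtain ⟨l, hl, hlt⟩ := exists_Ico_subset_of_mem_nhds
      ((hcont.eventually_const_lt hc).and (gt_mem_nhds hta.2)) ⟨a, hta.2⟩
    obtain ⟨q, htq, hql⟩ := exists_rat_btwn hl
    obtain ⟨hqc, hqa⟩ := hlt ⟨htq.le, hql⟩
    exact hqc.le.trans ((ht q ⟨hta.1.trans htq, hqa.le⟩).1 ⟨hta.1, htq⟩)

/-- Off the support of `gX a`, elements of the orbit averaging to `gX a` are nonpositive. -/
lemma ae_nonpos_of_midpoint {a : ℝ} (ha : a ∈ Ico (0:ℝ) (1/2)) {x₁ x₂ : ℝ ⊕ Unit → ℝ}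
    (h₁ : x₁ ∈ Omega muX fX) (h₂ : x₂ ∈ Omega muX fX)
    (hmid : ∀ᵐ u ∂muX, gX a u = (x₁ u + x₂ u) / 2) :
    ∀ᵐ t ∂volume.restrict (Ioo (0:ℝ) (1/2)), t ∉ Ioo 0 a → x₁ (.inl t) ≤ 0 := by
  have hA : MeasurableSet (Sum.inl '' (Ioo 0 a)ᶜ : Set (ℝ ⊕ Unit))ᶜ :=
    (measurableEmbedding_sumInl.measurableSet_image.2 measurableSet_Ioo.compl).compl
  have h : ∫ u, max (fX u - 0) 0 ∂muX ≤
      ∫ u, (Sum.inl '' (Ioo 0 a)ᶜ : Set (ℝ ⊕ Unit))ᶜ.indicator (fun u => gX a u - 0) u ∂muX := by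
    simp only [sub_zero, max_eq_left (fX_nonneg _)]
    rw [← integral_gX ha]
    refine (integral_congr_ae (.of_forall fun u => ?_)).le
    refine (congrFun (indicator_eq_self.2 fun u hu => ?_) u).symm
    rintro ⟨t, ht, rfl⟩
    exact hu (by rw [gX_inl, indicator_of_notMem ht])
  have := ae_le_of_attains_hinge (integrable_muX integrableOn_fX) h₁ h₂ hmid hA h
  filter_upwards [(ae_muX_iff.1 this).1] with t ht hta
  exact ht.2 (by simpa using hta)

lemma extremePt_gX {a : ℝ} (ha : a ∈ Ico (0:ℝ) (1/2)) : ExtremePt muX (Omega muX fX) (gX a) := by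
  refine ⟨gX_mem_Omega ha, fun x₁ h₁ x₂ h₂ hmid => ?_⟩
  have hmid' : ∀ᵐ u ∂muX, gX a u = (x₂ u + x₁ u) / 2 := by simpa only [add_comm] using hmid
  have hinl : ∀ᵐ t ∂volume.restrict (Ioo (0:ℝ) (1/2)), x₁ (.inl t) = x₂ (.inl t) := by
    filter_upwards [ae_eq_gX_on_Ioo ha h₁ h₂ hmid, ae_eq_gX_on_Ioo ha h₂ h₁ hmid',
      ae_nonpos_of_midpoint ha h₁ h₂ hmid, ae_nonpos_of_midpoint ha h₂ h₁ hmid',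
      (ae_muX_iff.1 hmid).1] with t e₁ e₂ n₁ n₂ hm
    by_cases ht : t ∈ Ioo 0 a
    · rw [e₁ ht, e₂ ht]
    · rw [gX_inl, indicator_of_notMem ht] at hm
      linarith [n₁ ht, n₂ ht]
  refine ae_muX_iff.2 ⟨hinl, ?_⟩
  have hf := integrable_muX integrableOn_fX
  have htot : ∫ u, x₁ u ∂muX = ∫ u, x₂ u ∂muX :=
    ((maj_iff_integral_max hf h₁.1).1 h₁.2).2.trans
      ((maj_iff_integral_max hf h₂.1).1 h₂.2).2.symm
  have hi : ∀ x : ℝ ⊕ Unit → ℝ, Integrable x muX →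
      IntegrableOn (fun t => x (.inl t)) (Ioo 0 (1/2)) := fun x hx =>
    measurableEmbedding_sumInl.integrable_map_iff.1 hx.left_of_add_measure
  rw [integral_muX (hi x₁ h₁.1), integral_muX (hi x₂ h₂.1), integral_congr_ae hinl] at htot
  linarith

theorem truncations_are_extreme_points :
    (∀ a ∈ Ico (0:ℝ) (1/2), ExtremePt muX (Omega muX fX) (gX a)) ∧
      ExtremePt muX (Omega muX fX)
        (Sum.elim (fun _ => (0:ℝ)) (fun _ => 2 * Real.sqrt 2)) := by
  refine ⟨fun a ha => extremePt_gX ha, ?_⟩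
  have h : Sum.elim (fun _ => (0:ℝ)) (fun _ => 2 * Real.sqrt 2) = gX 0 := by
    simp only [gX, integral_one_div_sqrt]
    simp
  rw [h]
  exact extremePt_gX (by norm_num)
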